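/- Let V₁, V₂: ℝ → [0,∞) be Orlicz functions with V₁(x)/V₂(x) → ∞ as |x| → ∞. Fix R ∈ (0,∞). Then the maximizer ν* := argmax{ h(ν) : ν a probability measure on ℝ, m_{V₁}(ν) ≤ 1, m_{V₂}(ν) ∈ [0,R] } exists and is unique. Moreover, if X₁^{n,V₁} is uniformly distributed on B_1^{n,V₁} with empirical measure L^{n,V₁} := (1/n) Σ_{i=1}^n δ_{X₁^{n,V₁}(i)}, then for every open set G (in the topology induced by the metric d_{V₂}(μ,ν) := d_w(μ,ν) + |m_{V₂}(μ) − m_{V₂}(ν)| on probability measures with finite V₂-moment) containing ν*, one has lim_{ε→0} lim_{n→∞} ℙ[ L^{n,V₁} ∈ G | m_{V₂}(L^{n,V₁}) ∈ [−ε, R+ε] ] = 1. -/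

import Mathlib

open MeasureTheory Real Filter Topology ENNReal Classical

noncomputable section

/-- An Orlicz function: convex, symmetric, vanishing only at `0`, nonnegative. -/
def IsOrlicz (V : ℝ → ℝ) : Prop :=
  ConvexOn ℝ Set.univ V ∧ (∀ x, V (-x) = V x) ∧ V 0 = 0 ∧ (∀ x, x ≠ 0 → 0 < V x) ∧
    (∀ x, 0 ≤ V x)

/-- The Orlicz ball `B_R^{n,V} = {x ∈ ℝⁿ : ∑ V(x_k) ≤ R n}`. -/
def OrliczBall (V : ℝ → ℝ) (R : ℝ) (n : ℕ) : Set (Fin n → ℝ) :=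
  {x | ∑ i, V (x i) ≤ R * n}

/-- The uniform distribution on the Orlicz ball (normalized Lebesgue measure). -/
def unifBall (V : ℝ → ℝ) (R : ℝ) (n : ℕ) : Measure (Fin n → ℝ) :=
  (volume (OrliczBall V R n))⁻¹ • volume.restrict (OrliczBall V R n)

/-- The `V`-moment `m_V(μ) = ∫ V dμ`, as a lower integral in `[0,∞]`. -/
def mV (V : ℝ → ℝ) (μ : Measure ℝ) : ℝ≥0∞ := ∫⁻ x, ENNReal.ofReal (V x) ∂μ

/-- The generalized Wasserstein space `M₁^W(ℝ)` of probability measures with finite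
`W`-moment. -/
def M1 (W : ℝ → ℝ) : Type := {μ : ProbabilityMeasure ℝ // mV W ↑μ ≠ ⊤}

/-- The `d_W`-topology on `M₁^W(ℝ)`: the topology of weak convergence together with
convergence of `W`-moments, i.e. the topology induced by `μ ↦ (μ, m_W(μ))`. -/
instance (W : ℝ → ℝ) : TopologicalSpace (M1 W) :=
  TopologicalSpace.induced
    (fun μ : M1 W => ((μ.1 : ProbabilityMeasure ℝ), (mV W ↑μ.1).toReal)) inferInstance

/-- The empirical probability measure `(1/(n+1)) ∑_{i} δ_{x i}`. -/
def empProb (n : ℕ) (x : Fin (n + 1) → ℝ) : ProbabilityMeasure ℝ :=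
  ⟨((n : ℝ≥0∞) + 1)⁻¹ • ∑ i, Measure.dirac (x i), by
    constructor
    simp [Measure.smul_apply, MeasureTheory.Measure.finset_sum_apply]
    rw [ENNReal.inv_mul_cancel] <;> simp⟩

/-- The empirical measure, as an element of `M₁^W(ℝ)`. -/
def empM1 (W : ℝ → ℝ) (n : ℕ) (x : Fin (n + 1) → ℝ) : M1 W :=
  ⟨empProb n x, by
    show (∫⁻ y, ENNReal.ofReal (W y)
        ∂(((n : ℝ≥0∞) + 1)⁻¹ • ∑ i, Measure.dirac (x i))) ≠ ⊤
    rw [lintegral_smul_measure, lintegral_finset_sum_measure]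
    simp only [lintegral_dirac]
    exact ENNReal.mul_ne_top (by simp)
      (by simp [ENNReal.sum_eq_top, ENNReal.ofReal_ne_top])⟩

/-- Differential entropy `h(ν) = -∫ log(dν/dx) dν`, valued in `EReal`, with
`h(ν) = ⊥` when `ν` is not absolutely continuous (or the integral does not exist). -/
def diffEnt (ν : Measure ℝ) : EReal :=
  if ν ≪ volume ∧ Integrable (fun x => Real.log (ν.rnDeriv volume x).toReal) ν
  then ((-(∫ x, Real.log (ν.rnDeriv volume x).toReal ∂ν) : ℝ) : EReal) else ⊥

/-!
The maximizer is a Gibbs measure `γ = Z⁻¹ exp (-W) dx`, where the energy `W` is a nonnegative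
combination of the constraint functions: its coefficients `p` minimize the Lagrange dual function,
and first-order optimality yields both feasibility of `γ` and complementary slackness, so the Gibbs
variational principle bounds the entropy of every feasible measure, with equality only at `γ`.

Since `γ^n` has density `Z^{-n} exp (-∑ W (x_i))`, Lebesgue measure on the intersection of the
Orlicz balls of radii `c k` is at most `Z^n exp (n ∑ p k * c k) γ^n`. Up to a factor `exp (o(n))`
the constant is the volume of that intersection, by the law of large numbers under `γ^n` and a
rescaling that brings typical points, which may violate the constraints slightly, back into the
balls. Conditioned Lebesgue measure is therefore at most `exp (n τ) γ^n`, with `τ` as small as the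
enlargement `ε` allows, and every event that is exponentially unlikely under `γ^n` remains unlikely.
Weak deviations of the empirical measure are exponentially unlikely by the Hoeffding inequality; on
the `V₁`-ball the tails of `V₂` are uniformly small because `V₁ / V₂ → ∞`, which upgrades weak
convergence to convergence of the `V₂`-moment.
-/

lemma integrable_exp_neg_mul_abs {a : ℝ} (ha : 0 < a) :
    Integrable fun x : ℝ => rexp (-a * |x|) := by
  rw [← integrableOn_univ, ← Set.Iic_union_Ioi (a := (0 : ℝ)), integrableOn_union]
  constructor
  · refine (integrableOn_exp_mul_Iic ha 0).congr_fun (fun x hx => ?_) measurableSet_Iic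
    simp [abs_of_nonpos (Set.mem_Iic.1 hx)]
  · refine (integrableOn_exp_mul_Ioi (neg_lt_zero.2 ha) 0).congr_fun (fun x hx => ?_)
      measurableSet_Ioi
    simp [abs_of_pos (Set.mem_Ioi.1 hx)]

namespace IsOrlicz

variable {V : ℝ → ℝ}

lemma continuous (h : IsOrlicz V) : Continuous V :=
  continuousOn_univ.1 (h.1.continuousOn isOpen_univ)

lemma nonneg (h : IsOrlicz V) (x : ℝ) : 0 ≤ V x := h.2.2.2.2 x

lemma map_zero (h : IsOrlicz V) : V 0 = 0 := h.2.2.1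

lemma pos (h : IsOrlicz V) {x : ℝ} (hx : x ≠ 0) : 0 < V x := h.2.2.2.1 x hx

lemma map_abs (h : IsOrlicz V) (x : ℝ) : V |x| = V x := by
  rcases abs_choice x with hx | hx <;> rw [hx]
  exact h.2.1 x

lemma map_mul_le (h : IsOrlicz V) {t : ℝ} (ht₀ : 0 ≤ t) (ht₁ : t ≤ 1) (x : ℝ) :
    V (t * x) ≤ t * V x := by
  have := h.1.2 (Set.mem_univ x) (Set.mem_univ 0) ht₀ (sub_nonneg.2 ht₁) (by ring)
  simpa [h.map_zero] using this

lemma le_of_abs_le (h : IsOrlicz V) {x y : ℝ} (hxy : |x| ≤ |y|) : V x ≤ V y := by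
  rw [← h.map_abs x, ← h.map_abs y]
  rcases (abs_nonneg y).eq_or_lt with hy | hy
  · rw [le_antisymm hxy (hy ▸ abs_nonneg x)]
  · have hle := h.map_mul_le (t := |x| / |y|) (by positivity) ((div_le_one hy).2 hxy) |y|
    rw [div_mul_cancel₀ _ hy.ne'] at hle
    exact hle.trans (mul_le_of_le_one_left (h.nonneg _) ((div_le_one hy).2 hxy))

lemma mul_abs_sub_one_le (h : IsOrlicz V) (x : ℝ) : V 1 * (|x| - 1) ≤ V x := by
  rcases le_total |x| 1 with hx | hx
  · exact (mul_nonpos_of_nonneg_of_nonpos (h.nonneg 1) (sub_nonpos.2 hx)).trans (h.nonneg x)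
  · have hx₀ : 0 < |x| := one_pos.trans_le hx
    have hle := h.map_mul_le (t := |x|⁻¹) (by positivity) (inv_le_one_of_one_le₀ hx) |x|
    rw [inv_mul_cancel₀ hx₀.ne', h.map_abs, inv_mul_eq_div, le_div_iff₀ hx₀] at hle
    linarith [h.nonneg 1]

lemma const_mul (h : IsOrlicz V) {a : ℝ} (ha : 0 < a) : IsOrlicz fun x => a * V x :=
  ⟨h.1.smul ha.le, fun x => congrArg (a * ·) (h.2.1 x), by simp only [h.map_zero, mul_zero],
    fun _ hx => mul_pos ha (h.pos hx), fun x => mul_nonneg ha.le (h.nonneg x)⟩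

lemma integrable_exp_neg (h : IsOrlicz V) : Integrable fun x => rexp (-V x) := by
  refine ((integrable_exp_neg_mul_abs (h.pos one_ne_zero)).const_mul (rexp (V 1))).mono'
    h.continuous.neg.rexp.aestronglyMeasurable (ae_of_all _ fun x => ?_)
  rw [Real.norm_of_nonneg (exp_pos _).le, ← Real.exp_add]
  exact Real.exp_le_exp.2 (by linarith [h.mul_abs_sub_one_le x])

lemma toReal_mV (h : IsOrlicz V) (μ : Measure ℝ) : (mV V μ).toReal = ∫ x, V x ∂μ :=
  (integral_eq_lintegral_of_nonneg_ae (ae_of_all _ h.nonneg)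
    h.continuous.aestronglyMeasurable).symm

lemma integrable_of_mV_le (h : IsOrlicz V) {μ : Measure ℝ} {c : ℝ}
    (hμ : mV V μ ≤ ENNReal.ofReal c) : Integrable V μ :=
  (lintegral_ofReal_ne_top_iff_integrable h.continuous.aestronglyMeasurable
    (ae_of_all _ h.nonneg)).1 (ne_top_of_le_ne_top ofReal_ne_top hμ)

lemma integral_le_of_mV_le (h : IsOrlicz V) {μ : Measure ℝ} {c : ℝ} (hc : 0 ≤ c)
    (hμ : mV V μ ≤ ENNReal.ofReal c) : ∫ x, V x ∂μ ≤ c :=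
  h.toReal_mV μ ▸ ENNReal.toReal_le_of_le_ofReal hc hμ

end IsOrlicz

section Energy

variable {κ : Type*} [Fintype κ] {V : κ → ℝ → ℝ} {p : κ → ℝ}

/-- The energy `∑ k, p k * V k` of the Gibbs measure attached to the Lagrange multipliers `p` of
the constraints on the moments `∫ V k`. -/
def energy (V : κ → ℝ → ℝ) (p : κ → ℝ) (x : ℝ) : ℝ := ∑ k, p k * V k x

lemma IsOrlicz.energy (hV : ∀ k, IsOrlicz (V k)) (hp : 0 < p) : IsOrlicz (energy V p) := by
  obtain ⟨hp₀, i, hi⟩ := Pi.lt_def.1 hp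
  have hterm : ∀ k x, 0 ≤ p k * V k x := fun k x => mul_nonneg (hp₀ k) ((hV k).nonneg x)
  refine ⟨⟨convex_univ, fun x _ y _ a b ha hb hab => ?_⟩, fun x => ?_, ?_, fun x hx => ?_,
    fun x => Finset.sum_nonneg fun k _ => hterm k x⟩
  · simp only [_root_.energy, Finset.smul_sum, ← Finset.sum_add_distrib]
    exact Finset.sum_le_sum fun k _ =>
      ((hV k).1.smul (hp₀ k)).2 (Set.mem_univ x) (Set.mem_univ y) ha hb hab
  · exact Finset.sum_congr rfl fun k _ => by rw [(hV k).2.1 x]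
  · exact Finset.sum_eq_zero fun k _ => by rw [(hV k).map_zero, mul_zero]
  · exact Finset.sum_pos' (fun k _ => hterm k x)
      ⟨i, Finset.mem_univ i, mul_pos hi ((hV i).pos hx)⟩

lemma integrable_energy_of_mV_le {μ : Measure ℝ} {c : κ → ℝ} (hV : ∀ k, IsOrlicz (V k))
    (hμ : ∀ k, mV (V k) μ ≤ ENNReal.ofReal (c k)) : Integrable (energy V p) μ :=
  integrable_finsetSum _ fun k _ => ((hV k).integrable_of_mV_le (hμ k)).const_mul (p k)

lemma integral_energy {μ : Measure ℝ} (hμ : ∀ k, Integrable (V k) μ) :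
    ∫ x, energy V p x ∂μ = ∑ k, p k * ∫ x, V k x ∂μ := by
  simp only [energy, integral_finsetSum _ fun k _ => (hμ k).const_mul (p k), integral_const_mul]

lemma integral_energy_le {μ : Measure ℝ} {c : κ → ℝ} (hV : ∀ k, IsOrlicz (V k)) (hp : 0 ≤ p)
    (hc : ∀ k, 0 ≤ c k) (hμ : ∀ k, mV (V k) μ ≤ ENNReal.ofReal (c k)) :
    ∫ x, energy V p x ∂μ ≤ ∑ k, p k * c k := by
  rw [integral_energy fun k => (hV k).integrable_of_mV_le (hμ k)]
  exact Finset.sum_le_sum fun k _ =>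
    mul_le_mul_of_nonneg_left ((hV k).integral_le_of_mV_le (hc k) (hμ k)) (hp k)

lemma sum_energy {ι : Type*} [Fintype ι] (x : ι → ℝ) :
    ∑ i, energy V p (x i) = ∑ k, p k * ∑ i, V k (x i) := by
  simp only [energy, Finset.mul_sum]
  exact Finset.sum_comm

end Energy

section Gibbs

/-- The partition function `Z = ∫ exp (-W)` of the energy `W`, which normalizes `gibbs W`. -/
def partitionFun (W : ℝ → ℝ) : ℝ := ∫ x, rexp (-W x)

/-- The Gibbs measure of the energy `W`: the probability measure with density `exp (-W) / Z`. It
is the zero measure when `exp (-W)` is not integrable. -/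
def gibbs (W : ℝ → ℝ) : Measure ℝ := volume.tilted fun x => -W x

variable {W : ℝ → ℝ} {ν : Measure ℝ} [IsProbabilityMeasure ν]

lemma isProbabilityMeasure_gibbs (hW : Integrable fun x => rexp (-W x)) :
    IsProbabilityMeasure (gibbs W) :=
  isProbabilityMeasure_tilted hW

lemma diffEnt_gibbs (hW : Integrable fun x => rexp (-W x)) (hi : Integrable W (gibbs W)) :
    diffEnt (gibbs W) = (log (partitionFun W) + ∫ x, W x ∂gibbs W : ℝ) := by
  have := isProbabilityMeasure_gibbs hW
  have hac : gibbs W ≪ volume := tilted_absolutelyContinuous _ _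
  have hlog : (fun x => log ((gibbs W).rnDeriv volume x).toReal) =ᵐ[gibbs W]
      fun x => -W x - log (partitionFun W) :=
    hac.ae_le (log_rnDeriv_tilted_left_self hW)
  have hneg : Integrable (fun x => -W x) (gibbs W) := hi.neg
  rw [diffEnt, if_pos ⟨hac, (integrable_congr hlog).2 (hneg.sub (integrable_const _))⟩,
    integral_congr_ae hlog, integral_sub hneg (integrable_const _), integral_neg]
  simp only [integral_const, probReal_univ, one_smul]
  congr 1
  ring

lemma klDiv_gibbs (hW : Integrable fun x => rexp (-W x)) (hi : Integrable W ν)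
    (hν : ν ≪ volume) (hlog : Integrable (fun x => log (ν.rnDeriv volume x).toReal) ν) :
    InformationTheory.klDiv ν (gibbs W) ≠ ⊤ ∧ (InformationTheory.klDiv ν (gibbs W)).toReal =
      log (partitionFun W) + ∫ x, W x ∂ν + ∫ x, log (ν.rnDeriv volume x).toReal ∂ν := by
  have := isProbabilityMeasure_gibbs hW
  have hac : ν ≪ gibbs W := hν.trans (absolutelyContinuous_tilted hW)
  have hneg : Integrable (fun x => -W x) ν := hi.neg
  have hllr : Integrable (llr ν (gibbs W)) ν := integrable_llr_tilted_right hν hneg hlog hW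
  refine ⟨InformationTheory.klDiv_ne_top hac hllr, ?_⟩
  rw [InformationTheory.toReal_klDiv_of_measure_eq hac (by simp), gibbs,
    integral_llr_tilted_right hν hneg hW hlog]
  simp only [llr, partitionFun, integral_neg]
  ring

lemma diffEnt_le_log_partitionFun_add_integral (hW : Integrable fun x => rexp (-W x))
    (hi : Integrable W ν) : diffEnt ν ≤ (log (partitionFun W) + ∫ x, W x ∂ν : ℝ) := by
  rw [diffEnt]
  split_ifs with h
  · have hkl := (klDiv_gibbs hW hi h.1 h.2).2
    exact EReal.coe_le_coe_iff.2
      (by linarith [ENNReal.toReal_nonneg (a := InformationTheory.klDiv ν (gibbs W))])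
  · exact bot_le

lemma eq_gibbs_of_log_partitionFun_add_integral_le (hW : Integrable fun x => rexp (-W x))
    (hi : Integrable W ν) (hle : (log (partitionFun W) + ∫ x, W x ∂ν : ℝ) ≤ diffEnt ν) :
    ν = gibbs W := by
  have := isProbabilityMeasure_gibbs hW
  rw [diffEnt] at hle
  split_ifs at hle with h
  · obtain ⟨htop, hkl⟩ := klDiv_gibbs hW hi h.1 h.2
    have hzero : (InformationTheory.klDiv ν (gibbs W)).toReal = 0 :=
      le_antisymm (by linarith [EReal.coe_le_coe_iff.1 hle]) ENNReal.toReal_nonneg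
    exact InformationTheory.klDiv_eq_zero_iff.1
      (((ENNReal.toReal_eq_zero_iff _).1 hzero).resolve_right htop)
  · exact absurd hle (not_le.2 (EReal.bot_lt_coe _))

lemma IsOrlicz.integrable_exp_mul_gibbs (hW : IsOrlicz W) {s : ℝ} (hs : s < 1) :
    Integrable (fun x => rexp (s * W x)) (gibbs W) := by
  rw [gibbs, integrable_tilted_iff hW.integrable_exp_neg]
  refine (hW.const_mul (sub_pos.2 hs)).integrable_exp_neg.congr (ae_of_all _ fun x => ?_)
  simp only [smul_eq_mul, ← Real.exp_add]
  ring_nf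

lemma IsOrlicz.zero_mem_interior_integrableExpSet_gibbs (hW : IsOrlicz W) :
    0 ∈ interior (ProbabilityTheory.integrableExpSet W (gibbs W)) :=
  mem_interior.2 ⟨Set.Iio 1, fun _ hs => hW.integrable_exp_mul_gibbs hs, isOpen_Iio,
    Set.mem_Iio.2 one_pos⟩

lemma IsOrlicz.integrable_gibbs (hW : IsOrlicz W) : Integrable W (gibbs W) := by
  simpa using ProbabilityTheory.integrable_pow_of_mem_interior_integrableExpSet
    hW.zero_mem_interior_integrableExpSet_gibbs 1

end Gibbs

section Moments

variable {Ω : Type*} [MeasurableSpace Ω] {ν : Measure Ω} [IsProbabilityMeasure ν] {X : Ω → ℝ}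
  {c : ℝ}

lemma tendsto_one_sub_exp_neg_mul_div (w : ℝ) :
    Tendsto (fun s : ℝ => (1 - rexp (-s * w)) / s) (𝓝[>] 0) (𝓝 w) := by
  have hderiv : HasDerivAt (fun s : ℝ => 1 - rexp (-s * w)) w 0 := by
    simpa using ((hasDerivAt_id (0 : ℝ)).neg.mul_const w).exp.const_sub 1
  refine (hderiv.tendsto_slope_zero.mono_left (nhdsWithin_mono _ fun s hs => ne_of_gt hs)).congr
    fun s => ?_
  simp [div_eq_inv_mul]

lemma lintegral_ofReal_le_of_exp_neg_mul_le_mgf (hX : Measurable X) (hX₀ : 0 ≤ X)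
    (h : ∀ s : ℝ, 0 < s → rexp (-s * c) ≤ ProbabilityTheory.mgf X ν (-s)) :
    ∫⁻ ω, ENNReal.ofReal (X ω) ∂ν ≤ ENNReal.ofReal c := by
  have hle : ∀ s : ℝ, 0 < s →
      ∫⁻ ω, ENNReal.ofReal ((1 - rexp (-s * X ω)) / s) ∂ν ≤ ENNReal.ofReal c := by
    intro s hs
    have hexp : ∀ ω, rexp (-s * X ω) ≤ 1 := fun ω =>
      Real.exp_le_one_iff.2 (mul_nonpos_of_nonpos_of_nonneg (neg_nonpos.2 hs.le) (hX₀ ω))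
    have hint : Integrable (fun ω => rexp (-s * X ω)) ν :=
      Integrable.of_mem_Icc 0 1 (by fun_prop) (ae_of_all _ fun ω => ⟨(exp_pos _).le, hexp ω⟩)
    have hint' : Integrable (fun ω => (1 - rexp (-s * X ω)) / s) ν :=
      ((integrable_const 1).sub hint).div_const s
    rw [← ofReal_integral_eq_lintegral_ofReal hint'
      (ae_of_all _ fun ω => div_nonneg (sub_nonneg.2 (hexp ω)) hs.le), integral_div,
      integral_sub (integrable_const 1) hint, integral_const, probReal_univ, one_smul]
    refine ENNReal.ofReal_le_ofReal ((div_le_iff₀ hs).2 ?_)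
    have hmgf : rexp (-s * c) ≤ ∫ ω, rexp (-s * X ω) ∂ν := h s hs
    linarith [Real.add_one_le_exp (-s * c)]
  calc ∫⁻ ω, ENNReal.ofReal (X ω) ∂ν
      = ∫⁻ ω, liminf (fun s => ENNReal.ofReal ((1 - rexp (-s * X ω)) / s)) (𝓝[>] (0 : ℝ)) ∂ν :=
        lintegral_congr fun ω =>
          (ENNReal.tendsto_ofReal (tendsto_one_sub_exp_neg_mul_div (X ω))).liminf_eq.symm
    _ ≤ liminf (fun s => ∫⁻ ω, ENNReal.ofReal ((1 - rexp (-s * X ω)) / s) ∂ν) (𝓝[>] (0 : ℝ)) :=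
        lintegral_liminf_le fun s => by fun_prop
    _ ≤ ENNReal.ofReal c :=
        (liminf_le_liminf (by filter_upwards [self_mem_nhdsWithin] using hle)).trans_eq
          (liminf_const _)

lemma integral_eq_of_eventually_exp_mul_le_mgf
    (hint : 0 ∈ interior (ProbabilityTheory.integrableExpSet X ν))
    (h : ∀ᶠ s in 𝓝 0, rexp (s * c) ≤ ProbabilityTheory.mgf X ν s) :
    ∫ ω, X ω ∂ν = c := by
  have hexp : HasDerivAt (fun s : ℝ => rexp (s * c)) c 0 := by
    simpa using ((hasDerivAt_id (0 : ℝ)).mul_const c).exp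
  have hmin : IsLocalMin (fun s => ProbabilityTheory.mgf X ν s - rexp (s * c)) 0 := by
    filter_upwards [h] with s hs
    simpa using hs
  have hderiv := hmin.hasDerivAt_eq_zero ((ProbabilityTheory.hasDerivAt_mgf hint).sub hexp)
  simpa [sub_eq_zero] using hderiv

end Moments

section Dual

variable {κ : Type*} [Fintype κ] {V : κ → ℝ → ℝ} {c p q : κ → ℝ}

/-- The exponential `∫ exp (∑ k, p k * (c k - V k))` of the Lagrange dual function
`log Z + ∑ k, p k * c k` of entropy maximization under the constraints `∫ V k ≤ c k`. It takes the
value `⊤` at `p = 0`, which makes it lower semicontinuous on the whole closed orthant. -/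
def dualFun (V : κ → ℝ → ℝ) (c p : κ → ℝ) : ℝ≥0∞ :=
  ∫⁻ x, ENNReal.ofReal (rexp (∑ k, p k * c k - energy V p x))

lemma lowerSemicontinuous_dualFun (hV : ∀ k, Measurable (V k)) :
    LowerSemicontinuous (dualFun V c) := by
  refine lowerSemicontinuous_iff_le_liminf.2 fun p => ?_
  have hcont : ∀ x, Continuous fun q : κ → ℝ =>
      ENNReal.ofReal (rexp (∑ k, q k * c k - energy V q x)) := fun x =>
    ENNReal.continuous_ofReal.comp (by unfold energy; fun_prop)
  calc dualFun V c p
      = ∫⁻ x, liminf (fun q => ENNReal.ofReal (rexp (∑ k, q k * c k - energy V q x))) (𝓝 p) :=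
        lintegral_congr fun x => ((hcont x).tendsto p).liminf_eq.symm
    _ ≤ liminf (dualFun V c) (𝓝 p) := lintegral_liminf_le fun q => by unfold energy; fun_prop

lemma dualFun_zero : dualFun V c 0 = ⊤ := by simp [dualFun, energy]

lemma dualFun_eq (hV : ∀ k, IsOrlicz (V k)) (hp : 0 < p) :
    dualFun V c p = ENNReal.ofReal (rexp (∑ k, p k * c k) * partitionFun (energy V p)) := by
  rw [partitionFun, ← integral_const_mul, ofReal_integral_eq_lintegral_ofReal
    ((IsOrlicz.energy hV hp).integrable_exp_neg.const_mul _) (ae_of_all _ fun x => by positivity)]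
  simp only [dualFun, sub_eq_add_neg, Real.exp_add]

lemma ofReal_mul_exp_le_dualFun (hV : ∀ k, IsOrlicz (V k)) (hp : 0 ≤ p) (r : ℝ) :
    ENNReal.ofReal (2 * r * rexp (∑ k, p k * c k - energy V p r)) ≤ dualFun V c p := by
  calc ENNReal.ofReal (2 * r * rexp (∑ k, p k * c k - energy V p r))
      = ∫⁻ _ in Set.Icc (-r) r, ENNReal.ofReal (rexp (∑ k, p k * c k - energy V p r)) := by
        rw [setLIntegral_const, Real.volume_Icc, ← ENNReal.ofReal_mul (exp_pos _).le]
        ring_nf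
    _ ≤ ∫⁻ x in Set.Icc (-r) r, ENNReal.ofReal (rexp (∑ k, p k * c k - energy V p x)) := by
        refine setLIntegral_mono' measurableSet_Icc fun x hx => ENNReal.ofReal_le_ofReal
          (Real.exp_le_exp.2 (sub_le_sub_left (Finset.sum_le_sum fun k _ => ?_) _))
        exact mul_le_mul_of_nonneg_left
          ((hV k).le_of_abs_le ((abs_le.2 hx).trans (le_abs_self r))) (hp k)
    _ ≤ dualFun V c p := setLIntegral_le_lintegral _ _

lemma exists_pos_forall_le_half {κ : Type*} [Finite κ] {V : κ → ℝ → ℝ} {c : κ → ℝ}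
    (hV : ∀ k, IsOrlicz (V k)) (hc : ∀ k, 0 < c k) :
    ∃ r, 0 < r ∧ ∀ k, V k r ≤ c k / 2 := by
  have hev : ∀ᶠ r in 𝓝[>] (0 : ℝ), ∀ k, V k r ≤ c k / 2 := eventually_all.2 fun k =>
    (((hV k).continuous.tendsto' 0 0 (hV k).map_zero).mono_left
      nhdsWithin_le_nhds).eventually_le_const (half_pos (hc k))
  obtain ⟨r, hr, hpos⟩ := (hev.and self_mem_nhdsWithin).exists
  exact ⟨r, hpos, hr⟩

lemma exists_forall_notMem_Icc_le_dualFun (hV : ∀ k, IsOrlicz (V k)) (hc : ∀ k, 0 < c k) (M : ℝ) :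
    ∃ b : κ → ℝ, ∀ p, 0 ≤ p → p ∉ Set.Icc 0 b → ENNReal.ofReal M ≤ dualFun V c p := by
  obtain ⟨r, hr, hVr⟩ := exists_pos_forall_le_half hV hc
  refine ⟨fun k => M / r / c k, fun p hp hpb => ?_⟩
  obtain ⟨i, hi⟩ : ∃ i, M / r / c i < p i := by
    by_contra! hle
    exact hpb ⟨hp, hle⟩
  have hsum : M / r ≤ ∑ k, p k * c k := calc
    M / r ≤ p i * c i := ((div_lt_iff₀ (hc i)).1 hi).le
    _ ≤ ∑ k, p k * c k := Finset.single_le_sum (f := fun k => p k * c k)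
        (fun k _ => mul_nonneg (hp k) (hc k).le) (Finset.mem_univ i)
  have henergy : energy V p r ≤ (∑ k, p k * c k) / 2 := by
    rw [energy, Finset.sum_div]
    exact Finset.sum_le_sum fun k _ =>
      (mul_le_mul_of_nonneg_left (hVr k) (hp k)).trans_eq (mul_div_assoc _ _ _).symm
  refine le_trans (ENNReal.ofReal_le_ofReal ?_) (ofReal_mul_exp_le_dualFun hV hp r)
  calc M = 2 * r * (M / r / 2) := by field_simp
    _ ≤ 2 * r * rexp (∑ k, p k * c k - energy V p r) := by
      refine mul_le_mul_of_nonneg_left ?_ (by positivity)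
      linarith [Real.add_one_le_exp (∑ k, p k * c k - energy V p r)]

lemma exists_isMinOn_dualFun [Nonempty κ] (hV : ∀ k, IsOrlicz (V k)) (hc : ∀ k, 0 < c k) :
    ∃ p, 0 < p ∧ IsMinOn (dualFun V c) (Set.Ici 0) p := by
  have hone : (0 : κ → ℝ) < 1 := one_pos
  have hfin := dualFun_eq (c := c) hV hone
  obtain ⟨b, hb⟩ := exists_forall_notMem_Icc_le_dualFun hV hc
    (rexp (∑ k, (1 : κ → ℝ) k * c k) * partitionFun (energy V 1))
  rw [← hfin] at hb
  have hlsc : LowerSemicontinuous (dualFun V c) :=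
    lowerSemicontinuous_dualFun fun k => (hV k).continuous.measurable
  obtain ⟨p, hp, hmin⟩ := LowerSemicontinuousOn.exists_isMinOn (s := Set.Icc 0 (b ⊔ 1))
    ⟨1, hone.le, le_sup_right⟩ isCompact_Icc (hlsc.lowerSemicontinuousOn _)
  have hp₁ : dualFun V c p ≤ dualFun V c 1 := hmin ⟨hone.le, le_sup_right⟩
  refine ⟨p, hp.1.lt_of_ne ?_, fun q hq => ?_⟩
  · rintro rfl
    rw [dualFun_zero, hfin] at hp₁
    exact ENNReal.ofReal_ne_top (top_le_iff.1 hp₁)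
  · by_cases hqb : q ∈ Set.Icc 0 b
    · exact hmin ⟨hqb.1, hqb.2.trans le_sup_left⟩
    · exact hp₁.trans (hb q hq hqb)

lemma exp_le_integral_gibbs_of_dualFun_le (hV : ∀ k, IsOrlicz (V k)) (hp : 0 < p) (hq : 0 < q)
    (h : dualFun V c p ≤ dualFun V c q) :
    rexp (∑ k, (p - q) k * c k) ≤ ∫ x, rexp (energy V (p - q) x) ∂gibbs (energy V p) := by
  have hZp : 0 < partitionFun (energy V p) :=
    integral_exp_pos (IsOrlicz.energy hV hp).integrable_exp_neg
  have hratio : ∫ x, rexp (energy V (p - q) x) ∂gibbs (energy V p) =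
      partitionFun (energy V q) / partitionFun (energy V p) := by
    rw [gibbs, integral_exp_tilted]
    congr 2 with x
    simp only [Pi.add_apply, energy, Pi.sub_apply, sub_mul, Finset.sum_sub_distrib]
    congr 1
    ring
  have hZq : 0 ≤ partitionFun (energy V q) := integral_nonneg fun x => (exp_pos _).le
  rw [dualFun_eq hV hp, dualFun_eq hV hq, ENNReal.ofReal_le_ofReal_iff (by positivity)] at h
  rw [hratio, le_div_iff₀ hZp]
  simp only [Pi.sub_apply, sub_mul, Finset.sum_sub_distrib]
  rwa [Real.exp_sub, div_mul_eq_mul_div, div_le_iff₀' (exp_pos _)]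

end Dual

/-- The Karush–Kuhn–Tucker conditions for `p` to be the Lagrange multipliers of entropy
maximization under the constraints `∫ V k ≤ c k`. Given the constraints, `integral_eq` is
equivalent to complementary slackness. -/
structure IsKKT {κ : Type*} [Fintype κ] (V : κ → ℝ → ℝ) (c p : κ → ℝ) : Prop where
  pos : 0 < p
  mV_le : ∀ k, mV (V k) (gibbs (energy V p)) ≤ ENNReal.ofReal (c k)
  integral_eq : ∫ x, energy V p x ∂gibbs (energy V p) = ∑ k, p k * c k

section KKT

variable {κ : Type*} [Fintype κ] {V : κ → ℝ → ℝ} {c p : κ → ℝ}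

lemma exists_isKKT [Nonempty κ] (hV : ∀ k, IsOrlicz (V k)) (hc : ∀ k, 0 < c k) :
    ∃ p, IsKKT V c p := by
  obtain ⟨p, hp, hmin⟩ := exists_isMinOn_dualFun hV hc
  have hW := IsOrlicz.energy hV hp
  have := isProbabilityMeasure_gibbs hW.integrable_exp_neg
  have hle : ∀ q, 0 < q → rexp (∑ k, (p - q) k * c k) ≤
      ∫ x, rexp (energy V (p - q) x) ∂gibbs (energy V p) := fun q hq =>
    exp_le_integral_gibbs_of_dualFun_le hV hp hq (hmin hq.le)
  refine ⟨p, hp, fun k => ?_, ?_⟩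
  · refine lintegral_ofReal_le_of_exp_neg_mul_le_mgf (hV k).continuous.measurable (hV k).nonneg
      fun s hs => ?_
    have hq := hle (p + Pi.single k s) (hp.trans_le (le_add_of_nonneg_right (by simpa using hs.le)))
    simpa [energy, ProbabilityTheory.mgf, Pi.single_apply, neg_mul] using hq
  · refine integral_eq_of_eventually_exp_mul_le_mgf hW.zero_mem_interior_integrableExpSet_gibbs ?_
    filter_upwards [Iio_mem_nhds one_pos] with s hs
    have hq := hle ((1 - s) • p) (smul_pos (sub_pos.2 hs) hp)
    simpa [energy, ProbabilityTheory.mgf, sub_smul, Finset.mul_sum, mul_assoc] using hq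

namespace IsKKT

lemma isOrlicz_energy (hp : IsKKT V c p) (hV : ∀ k, IsOrlicz (V k)) : IsOrlicz (energy V p) :=
  IsOrlicz.energy hV hp.pos

lemma integrable_exp_neg (hp : IsKKT V c p) (hV : ∀ k, IsOrlicz (V k)) :
    Integrable fun x => rexp (-energy V p x) :=
  (hp.isOrlicz_energy hV).integrable_exp_neg

lemma diffEnt_gibbs (hp : IsKKT V c p) (hV : ∀ k, IsOrlicz (V k)) :
    diffEnt (gibbs (energy V p)) = (log (partitionFun (energy V p)) + ∑ k, p k * c k : ℝ) := by
  rw [_root_.diffEnt_gibbs (hp.integrable_exp_neg hV) (hp.isOrlicz_energy hV).integrable_gibbs,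
    hp.integral_eq]

variable {ν : Measure ℝ} [IsProbabilityMeasure ν]

lemma diffEnt_le (hp : IsKKT V c p) (hV : ∀ k, IsOrlicz (V k)) (hc : ∀ k, 0 ≤ c k)
    (hν : ∀ k, mV (V k) ν ≤ ENNReal.ofReal (c k)) : diffEnt ν ≤ diffEnt (gibbs (energy V p)) := by
  rw [hp.diffEnt_gibbs hV]
  refine (diffEnt_le_log_partitionFun_add_integral (hp.integrable_exp_neg hV)
    (integrable_energy_of_mV_le hV hν)).trans ?_
  exact EReal.coe_le_coe (add_le_add_right (integral_energy_le hV hp.pos.le hc hν) _)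

lemma eq_gibbs (hp : IsKKT V c p) (hV : ∀ k, IsOrlicz (V k)) (hc : ∀ k, 0 ≤ c k)
    (hν : ∀ k, mV (V k) ν ≤ ENNReal.ofReal (c k)) (h : diffEnt ν = diffEnt (gibbs (energy V p))) :
    ν = gibbs (energy V p) := by
  refine eq_gibbs_of_log_partitionFun_add_integral_le (hp.integrable_exp_neg hV)
    (integrable_energy_of_mV_le hV hν) ?_
  rw [h, hp.diffEnt_gibbs hV]
  exact EReal.coe_le_coe (add_le_add_right (integral_energy_le hV hp.pos.le hc hν) _)

end IsKKT

end KKT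

section Product

lemma pi_tilted {ι : Type*} [Fintype ι] {Ω : ι → Type*} [∀ i, MeasurableSpace (Ω i)]
    (μ : ∀ i, Measure (Ω i)) [∀ i, SigmaFinite (μ i)] (f : ∀ i, Ω i → ℝ) :
    Measure.pi (fun i => (μ i).tilted (f i)) =
      (Measure.pi μ).tilted fun x => ∑ i, f i (x i) := by
  refine Measure.pi_eq fun s hs => ?_
  rw [tilted_apply_eq_ofReal_integral' _ (MeasurableSet.univ_pi hs), Measure.restrict_pi_pi]
  simp only [tilted_apply_eq_ofReal_integral' _ (hs _), Real.exp_sum]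
  rw [integral_fintype_prod_eq_prod fun i x => rexp (f i x)]
  simp only [← Finset.prod_div_distrib]
  rw [integral_fintype_prod_eq_prod fun i x => rexp (f i x) / ∫ y, rexp (f i y) ∂μ i,
    ENNReal.ofReal_prod_of_nonneg fun i _ => integral_nonneg fun x => by positivity]

variable {ι : Type*} [Fintype ι] {W : ℝ → ℝ} {A : Set (ι → ℝ)} {θ : ℝ}

lemma ofReal_exp_mul_pi_gibbs_apply (hW : Integrable fun x => rexp (-W x)) (A : Set (ι → ℝ)) :
    ENNReal.ofReal (rexp (Fintype.card ι * log (partitionFun W))) *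
        Measure.pi (fun _ => gibbs W) A =
      ∫⁻ x in A, ENNReal.ofReal (rexp (-∑ i, W (x i))) := by
  have hZ : 0 < partitionFun W := integral_exp_pos hW
  have hpow : rexp (Fintype.card ι * log (partitionFun W)) =
      ∫ x : ι → ℝ, rexp (∑ i, -W (x i)) := by
    simp only [Real.exp_sum]
    rw [integral_fintype_prod_volume_eq_pow fun x => rexp (-W x), mul_comm, Real.exp_mul,
      Real.exp_log hZ, Real.rpow_natCast, partitionFun]
  unfold gibbs
  rw [pi_tilted, ← volume_pi, tilted_apply, hpow, ← lintegral_const_mul' _ _ ofReal_ne_top]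
  refine lintegral_congr fun x => ?_
  rw [← hpow, ← ENNReal.ofReal_mul (exp_pos _).le, mul_div_cancel₀ _ (exp_pos _).ne',
    Finset.sum_neg_distrib]

lemma volume_le_pi_gibbs (hm : Measurable W) (hW : Integrable fun x => rexp (-W x))
    (hA : ∀ x ∈ A, ∑ i, W (x i) ≤ θ) :
    volume A ≤ ENNReal.ofReal (rexp (θ + Fintype.card ι * log (partitionFun W))) *
      Measure.pi (fun _ => gibbs W) A := by
  rw [Real.exp_add, ENNReal.ofReal_mul (exp_pos _).le, mul_assoc,
    ofReal_exp_mul_pi_gibbs_apply hW, ← lintegral_const_mul' _ _ ofReal_ne_top, ← setLIntegral_one]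
  refine setLIntegral_mono (by fun_prop) fun x hx => ?_
  rw [← ENNReal.ofReal_mul (exp_pos _).le, ← Real.exp_add, ENNReal.one_le_ofReal,
    Real.one_le_exp_iff]
  linarith [hA x hx]

lemma pi_gibbs_le_volume (hW : Integrable fun x => rexp (-W x))
    (hA : ∀ x ∈ A, θ ≤ ∑ i, W (x i)) :
    ENNReal.ofReal (rexp (θ + Fintype.card ι * log (partitionFun W))) *
      Measure.pi (fun _ => gibbs W) A ≤ volume A := by
  rw [Real.exp_add, ENNReal.ofReal_mul (exp_pos _).le, mul_assoc,
    ofReal_exp_mul_pi_gibbs_apply hW, ← lintegral_const_mul' _ _ ofReal_ne_top, ← setLIntegral_one]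
  refine setLIntegral_mono measurable_const fun x hx => ?_
  rw [← ENNReal.ofReal_mul (exp_pos _).le, ← Real.exp_add, ENNReal.ofReal_le_one,
    Real.exp_le_one_iff]
  linarith [hA x hx]

end Product

lemma tendsto_measure_one_of_tendsto_compl {ι : Type*} {l : Filter ι} {Ω : ι → Type*}
    [∀ i, MeasurableSpace (Ω i)] {P : ∀ i, Measure (Ω i)} {A : ∀ i, Set (Ω i)}
    (hP : ∀ᶠ i in l, IsProbabilityMeasure (P i)) (hA : Tendsto (fun i => P i (A i)ᶜ) l (𝓝 0)) :
    Tendsto (fun i => P i (A i)) l (𝓝 1) := by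
  have hlow : Tendsto (fun i => 1 - P i (A i)ᶜ) l (𝓝 1) := by
    simpa using ENNReal.Tendsto.sub tendsto_const_nhds hA (Or.inl one_ne_top)
  refine tendsto_of_tendsto_of_tendsto_of_le_of_le' hlow tendsto_const_nhds ?_ ?_
  · filter_upwards [hP] with i hi
    rw [tsub_le_iff_right, ← measure_univ (μ := P i), ← Set.union_compl_self (A i)]
    exact measure_union_le _ _
  · filter_upwards [hP] with i hi using prob_le_one

section LawOfLargeNumbers

variable {Ω : Type*} [MeasurableSpace Ω]

lemma pi_fin_eq_map_infinitePi (ν : Measure Ω) [IsProbabilityMeasure ν] (n : ℕ) :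
    Measure.pi (fun _ : Fin n => ν) =
      (Measure.infinitePi fun _ : ℕ => ν).map fun ω (i : Fin n) => ω i := by
  rw [Measure.map_infinitePi_infinitePi_of_inj Fin.val_injective, Measure.infinitePi_eq_pi]

variable {ν : Measure Ω} [IsProbabilityMeasure ν] {E : Type*} [NormedAddCommGroup E]
  [NormedSpace ℝ E] [CompleteSpace E] [MeasurableSpace E] [BorelSpace E] {X : Ω → E}

lemma ae_tendsto_average_infinitePi (hX : Measurable X) (hi : Integrable X ν) :
    ∀ᵐ ω ∂Measure.infinitePi fun _ : ℕ => ν,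
      Tendsto (fun n : ℕ => (n : ℝ)⁻¹ • ∑ i ∈ Finset.range n, X (ω i)) atTop
        (𝓝 (∫ y, X y ∂ν)) := by
  set P := Measure.infinitePi fun _ : ℕ => ν
  have hmap : ∀ i, P.map (fun ω => ω i) = ν := fun i => Measure.infinitePi_map_eval _ i
  have hident : ∀ i, ProbabilityTheory.IdentDistrib (fun ω : ℕ → Ω => X (ω i))
      (fun ω : ℕ → Ω => X (ω 0)) P P := fun i =>
    ProbabilityTheory.IdentDistrib.comp ⟨(measurable_pi_apply i).aemeasurable,
      (measurable_pi_apply 0).aemeasurable, by rw [hmap, hmap]⟩ hX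
  have hindep : ProbabilityTheory.iIndepFun (fun (i : ℕ) (ω : ℕ → Ω) => X (ω i)) P :=
    ProbabilityTheory.iIndepFun_infinitePi fun _ => hX
  have hi₀ : Integrable X (P.map fun ω => ω 0) := by rwa [hmap]
  have hmean : ∫ ω, X (ω 0) ∂P = ∫ y, X y ∂ν := by
    rw [← integral_map (measurable_pi_apply 0).aemeasurable hi₀.aestronglyMeasurable, hmap]
  rw [← hmean]
  exact ProbabilityTheory.strong_law_ae (fun (i : ℕ) (ω : ℕ → Ω) => X (ω i))
    (hi₀.comp_measurable (measurable_pi_apply 0)) (fun i j hij => hindep.indepFun hij) hident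

lemma tendsto_pi_average_notMem [SecondCountableTopology E] (hX : Measurable X)
    (hi : Integrable X ν) {u : Set E} (hu : u ∈ 𝓝 (∫ y, X y ∂ν)) :
    Tendsto (fun n : ℕ => Measure.pi (fun _ : Fin n => ν) {x | (n : ℝ)⁻¹ • ∑ i, X (x i) ∉ u})
      atTop (𝓝 0) := by
  obtain ⟨η, hη, hball⟩ := Metric.mem_nhds_iff.1 hu
  have hmeas := tendstoInMeasure_of_tendsto_ae
    (fun n => (Measurable.aestronglyMeasurable (by fun_prop)))
    (ae_tendsto_average_infinitePi hX hi)
  refine tendsto_of_tendsto_of_tendsto_of_le_of_le tendsto_const_nhds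
    (tendstoInMeasure_iff_dist.1 hmeas η hη) (fun _ => zero_le) fun n => ?_
  have hsub : {x : Fin n → Ω | (n : ℝ)⁻¹ • ∑ i, X (x i) ∉ u} ⊆
      {x | η ≤ dist ((n : ℝ)⁻¹ • ∑ i, X (x i)) (∫ y, X y ∂ν)} :=
    fun x hx => not_lt.1 fun hlt => hx (hball (Metric.mem_ball.2 hlt))
  refine (measure_mono hsub).trans_eq ?_
  rw [pi_fin_eq_map_infinitePi, Measure.map_apply (by fun_prop)
    (measurableSet_le measurable_const (by fun_prop))]
  simp only [Set.preimage_ofPred_eq, Fin.sum_univ_eq_sum_range fun _ => X _]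

end LawOfLargeNumbers

section Volume

variable {V : ℝ → ℝ}

lemma measurableSet_orliczBall (hV : Measurable V) (R : ℝ) (n : ℕ) :
    MeasurableSet (OrliczBall V R n) :=
  measurableSet_le (by fun_prop) measurable_const

lemma orliczBall_subset (V : ℝ → ℝ) {R R' : ℝ} (hR : R ≤ R') (n : ℕ) :
    OrliczBall V R n ⊆ OrliczBall V R' n := fun _ hx =>
  Set.mem_ofPred.2 (le_trans hx (mul_le_mul_of_nonneg_right hR n.cast_nonneg))

lemma IsOrlicz.orliczBall_subset_closedBall (hV : IsOrlicz V) (R : ℝ) (n : ℕ) :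
    OrliczBall V R n ⊆ Metric.closedBall 0 (|R| * n / V 1 + 1) := by
  intro x hx
  have hV₁ := hV.pos one_ne_zero
  rw [mem_closedBall_zero_iff, pi_norm_le_iff_of_nonneg (by positivity)]
  intro i
  rw [Real.norm_eq_abs, ← sub_le_iff_le_add, le_div_iff₀ hV₁, mul_comm]
  calc V 1 * (|x i| - 1) ≤ V (x i) := hV.mul_abs_sub_one_le _
    _ ≤ ∑ j, V (x j) := Finset.single_le_sum (fun j _ => hV.nonneg (x j)) (Finset.mem_univ i)
    _ ≤ R * n := hx
    _ ≤ |R| * n := mul_le_mul_of_nonneg_right (le_abs_self R) n.cast_nonneg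

lemma IsOrlicz.volume_orliczBall_ne_top (hV : IsOrlicz V) (R : ℝ) (n : ℕ) :
    volume (OrliczBall V R n) ≠ ⊤ :=
  measure_ne_top_of_subset (hV.orliczBall_subset_closedBall R n)
    (isCompact_closedBall _ _).measure_ne_top

lemma IsOrlicz.smul_mem_orliczBall (hV : IsOrlicz V) {t R : ℝ} (ht₀ : 0 ≤ t) (ht₁ : t ≤ 1) {n : ℕ}
    {x : Fin n → ℝ} (hx : x ∈ OrliczBall V R n) : t • x ∈ OrliczBall V (t * R) n :=
  calc ∑ i, V (t * x i) ≤ ∑ i, t * V (x i) :=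
        Finset.sum_le_sum fun i _ => hV.map_mul_le ht₀ ht₁ (x i)
    _ = t * ∑ i, V (x i) := (Finset.mul_sum ..).symm
    _ ≤ t * (R * n) := mul_le_mul_of_nonneg_left hx ht₀
    _ = t * R * n := (mul_assoc ..).symm

open scoped Pointwise in
lemma ofReal_exp_neg_mul_mul_volume_le {κ : Type*} {V : κ → ℝ → ℝ} (hV : ∀ k, IsOrlicz (V k))
    (c : κ → ℝ) {s : ℝ} (hs : 0 ≤ s) (n : ℕ) :
    ENNReal.ofReal (rexp (-(n * s))) * volume (⋂ k, OrliczBall (V k) (rexp s * c k) n) ≤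
      volume (⋂ k, OrliczBall (V k) (c k) n) := by
  have hsub : rexp (-s) • (⋂ k, OrliczBall (V k) (rexp s * c k) n) ⊆
      ⋂ k, OrliczBall (V k) (c k) n := by
    rintro _ ⟨x, hx, rfl⟩
    refine Set.mem_iInter.2 fun k => ?_
    have hk := (hV k).smul_mem_orliczBall (exp_pos (-s)).le (Real.exp_le_one_iff.2 (by linarith))
      (Set.mem_iInter.1 hx k)
    rwa [← mul_assoc, ← Real.exp_add, neg_add_cancel, Real.exp_zero, one_mul] at hk
  refine le_trans (le_of_eq ?_) (measure_mono hsub)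
  rw [Measure.addHaar_smul, Module.finrank_fin_fun, abs_of_pos (by positivity), ← Real.exp_nat_mul,
    mul_neg]

variable {κ : Type*} [Fintype κ] {V : κ → ℝ → ℝ} {c p : κ → ℝ} {τ : ℝ}

namespace IsKKT

lemma tendsto_pi_gibbs_compl_orliczBall (hp : IsKKT V c p) (hV : ∀ k, IsOrlicz (V k))
    (hc : ∀ k, 0 < c k) (hτ : 0 < τ) :
    Tendsto (fun n : ℕ => Measure.pi (fun _ : Fin n => gibbs (energy V p))
      ((⋂ k, OrliczBall (V k) (rexp τ * c k) n) ∩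
        {x | n * (∑ k, p k * c k - τ) ≤ ∑ i, energy V p (x i)})ᶜ) atTop (𝓝 0) := by
  have := isProbabilityMeasure_gibbs (hp.integrable_exp_neg hV)
  have hi : ∀ k, Integrable (V k) (gibbs (energy V p)) := fun k =>
    (hV k).integrable_of_mV_le (hp.mV_le k)
  let u : Set (κ → ℝ) := Set.univ.pi (fun k => Set.Iio (rexp τ * c k)) ∩
    {y | ∑ k, p k * c k - τ < ∑ k, p k * y k}
  have hu : u ∈ 𝓝 (∫ x, (fun k => V k x) ∂gibbs (energy V p)) := by
    refine (isOpen_set_pi Set.finite_univ fun _ _ => isOpen_Iio).inter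
      (isOpen_lt continuous_const (by fun_prop)) |>.mem_nhds ⟨fun k _ => ?_, ?_⟩
    · rw [Set.mem_Iio, eval_integral hi]
      refine ((hV k).integral_le_of_mV_le (hc k).le (hp.mV_le k)).trans_lt ?_
      exact lt_mul_of_one_lt_left (hc k) (Real.one_lt_exp_iff.2 hτ)
    · simp only [Set.mem_ofPred, eval_integral hi, ← integral_energy hi, hp.integral_eq,
        sub_lt_self_iff, hτ]
  refine tendsto_of_tendsto_of_tendsto_of_le_of_le' tendsto_const_nhds
    (tendsto_pi_average_notMem (measurable_pi_lambda _ fun k => (hV k).continuous.measurable)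
      (Integrable.of_eval hi) hu) (Eventually.of_forall fun _ => zero_le) ?_
  filter_upwards [eventually_gt_atTop 0] with n hn
  have hn₀ : (0 : ℝ) < n := Nat.cast_pos.2 hn
  refine measure_mono (Set.compl_subset_comm.1 fun x hx => ?_)
  obtain ⟨hball, henergy⟩ := not_not.1 hx
  have havg : ∀ k, ((n : ℝ)⁻¹ • ∑ i, fun k => V k (x i)) k = (∑ i, V k (x i)) / n := fun k => by
    rw [Pi.smul_apply, Finset.sum_apply, smul_eq_mul, inv_mul_eq_div]
  refine ⟨Set.mem_iInter.2 fun k => ?_, ?_⟩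
  · have hk := Set.mem_Iio.1 (hball k trivial)
    rw [havg, div_lt_iff₀ hn₀] at hk
    exact hk.le
  · have hsum := Set.mem_ofPred.1 henergy
    simp only [havg, ← mul_div_assoc, ← Finset.sum_div, ← sum_energy] at hsum
    rw [lt_div_iff₀ hn₀, mul_comm] at hsum
    exact hsum.le

lemma eventually_le_volume (hp : IsKKT V c p) (hV : ∀ k, IsOrlicz (V k)) (hc : ∀ k, 0 < c k)
    (hτ : 0 < τ) :
    ∀ᶠ n : ℕ in atTop,
      ENNReal.ofReal (rexp (n * (log (partitionFun (energy V p)) + ∑ k, p k * c k - τ))) ≤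
        volume (⋂ k, OrliczBall (V k) (c k) n) := by
  have := isProbabilityMeasure_gibbs (hp.integrable_exp_neg hV)
  set s := τ / 3 with hs_def
  have hs : 0 < s := by positivity
  have hexp : Tendsto (fun n : ℕ => ENNReal.ofReal (rexp (-(n * s)))) atTop (𝓝 0) := by
    simpa using ENNReal.tendsto_ofReal (tendsto_exp_neg_atTop_nhds_zero.comp
      (tendsto_natCast_atTop_atTop.atTop_mul_const hs))
  filter_upwards [hexp.eventually_lt (tendsto_measure_one_of_tendsto_compl
    (Eventually.of_forall fun _ => inferInstance)
    (hp.tendsto_pi_gibbs_compl_orliczBall hV hc hs)) zero_lt_one] with n hn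
  set B := ⋂ k, OrliczBall (V k) (rexp s * c k) n
  set A := B ∩ {x | n * (∑ k, p k * c k - s) ≤ ∑ i, energy V p (x i)}
  calc ENNReal.ofReal (rexp (n * (log (partitionFun (energy V p)) + ∑ k, p k * c k - τ)))
      = ENNReal.ofReal (rexp (-(n * s))) * (ENNReal.ofReal (rexp (n * (∑ k, p k * c k - s) +
          Fintype.card (Fin n) * log (partitionFun (energy V p)))) *
            ENNReal.ofReal (rexp (-(n * s)))) := by
        simp only [← ENNReal.ofReal_mul (exp_pos _).le, ← Real.exp_add, Fintype.card_fin]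
        congr 2
        rw [hs_def]
        ring
    _ ≤ ENNReal.ofReal (rexp (-(n * s))) * volume B := by
        gcongr
        exact (mul_le_mul_right hn.le _).trans ((pi_gibbs_le_volume (hp.integrable_exp_neg hV)
          fun x hx => hx.2).trans (measure_mono Set.inter_subset_left))
    _ ≤ volume (⋂ k, OrliczBall (V k) (c k) n) := ofReal_exp_neg_mul_mul_volume_le hV c hs.le n

end IsKKT

end Volume

section Concentration

variable {Ω : Type*} [MeasurableSpace Ω] {ν : Measure Ω} [IsProbabilityMeasure ν] {f : Ω → ℝ}
  {a b : ℝ}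

lemma hasSubgaussianMGF_eval_sub_integral {ι : Type*} [Fintype ι] (hf : Measurable f)
    (hab : ∀ x, f x ∈ Set.Icc a b) (i : ι) :
    ProbabilityTheory.HasSubgaussianMGF (fun x : ι → Ω => f (x i) - ∫ y, f y ∂ν)
      ((‖b - a‖₊ / 2) ^ 2) (Measure.pi fun _ : ι => ν) := by
  have hsub := ProbabilityTheory.hasSubgaussianMGF_of_mem_Icc (μ := ν) hf.aemeasurable
    (ae_of_all _ hab)
  generalize ∫ y, f y ∂ν = m at hsub ⊢
  rw [← (measurePreserving_eval (fun _ : ι => ν) i).map_eq] at hsub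
  exact .of_map (X := fun y => f y - m) (measurable_pi_apply i).aemeasurable hsub

lemma pi_sum_sub_integral_ge_le {ι : Type*} [Fintype ι] (hf : Measurable f)
    (hab : ∀ x, f x ∈ Set.Icc a b) {ε : ℝ} (hε : 0 ≤ ε) :
    (Measure.pi fun _ : ι => ν).real {x | ε ≤ ∑ i, (f (x i) - ∫ y, f y ∂ν)} ≤
      rexp (-ε ^ 2 / (2 * (Fintype.card ι * ((b - a) / 2) ^ 2))) := by
  have hind : ProbabilityTheory.iIndepFun (fun (i : ι) (x : ι → Ω) => f (x i) - ∫ y, f y ∂ν)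
      (Measure.pi fun _ : ι => ν) :=
    ProbabilityTheory.iIndepFun_pi (X := fun _ y => f y - ∫ z, f z ∂ν)
      fun _ => (hf.sub_const _).aemeasurable
  refine (ProbabilityTheory.HasSubgaussianMGF.measure_sum_ge_le_of_iIndepFun hind
    (s := Finset.univ) (fun i _ => hasSubgaussianMGF_eval_sub_integral hf hab i) hε).trans_eq ?_
  simp [div_pow]

lemma pi_le_average_le (hf : Measurable f) (hab : ∀ x, f x ∈ Set.Icc a b) {t : ℝ}
    (ht : ∫ y, f y ∂ν ≤ t) (n : ℕ) :
    (Measure.pi fun _ : Fin (n + 1) => ν).real {x | t ≤ (∑ i, f (x i)) / (n + 1)} ≤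
      rexp (-((n + 1 : ℕ) * (2 * ((t - ∫ y, f y ∂ν) ^ 2 / (b - a) ^ 2)))) := by
  refine (measureReal_mono fun x hx => ?_).trans ((pi_sum_sub_integral_ge_le hf hab
    (mul_nonneg (n + 1).cast_nonneg (sub_nonneg.2 ht))).trans_eq ?_)
  · have hsum : t * (n + 1) ≤ ∑ i, f (x i) := (le_div_iff₀ (by positivity)).1 hx
    simp only [Set.mem_ofPred, Finset.sum_sub_distrib, Finset.sum_const, Finset.card_univ,
      Fintype.card_fin, nsmul_eq_mul, Nat.cast_add, Nat.cast_one]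
    linarith
  · rw [Fintype.card_fin]
    congr 1
    field_simp

end Concentration

section ExpFilter

variable {Ω : Type*} [MeasurableSpace Ω]

/-- The filter of sets of finite configurations `⟨n, x⟩`, with `x : Fin (n + 1) → Ω`, whose
complement has exponentially small probability as `n → ∞` when the `n + 1` points of the
configuration are drawn independently from `ν`. -/
def expFilter (ν : Measure Ω) : Filter (Σ n : ℕ, Fin (n + 1) → Ω) where
  sets := {U | ∃ γ > 0, Tendsto (fun n : ℕ => ENNReal.ofReal (rexp ((n + 1 : ℕ) * γ)) *
    Measure.pi (fun _ : Fin (n + 1) => ν) {x | ⟨n, x⟩ ∉ U}) atTop (𝓝 0)}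
  univ_sets := ⟨1, one_pos, by simp⟩
  sets_of_superset := by
    rintro U U' ⟨γ, hγ, hU⟩ hUU'
    refine ⟨γ, hγ, tendsto_of_tendsto_of_tendsto_of_le_of_le tendsto_const_nhds hU
      (fun _ => zero_le) fun n => ?_⟩
    dsimp only
    gcongr
  inter_sets := by
    rintro U U' ⟨γ, hγ, hU⟩ ⟨γ', hγ', hU'⟩
    have hadd := hU.add hU'
    rw [add_zero] at hadd
    refine ⟨min γ γ', lt_min hγ hγ', tendsto_of_tendsto_of_tendsto_of_le_of_le tendsto_const_nhds
      hadd (fun _ => zero_le) fun n => ?_⟩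
    calc _ ≤ ENNReal.ofReal (rexp ((n + 1 : ℕ) * min γ γ')) *
          (Measure.pi (fun _ : Fin (n + 1) => ν) {x | ⟨n, x⟩ ∉ U} +
            Measure.pi (fun _ : Fin (n + 1) => ν) {x | ⟨n, x⟩ ∉ U'}) := by
          gcongr
          exact (measure_mono fun x hx => not_and_or.1 hx).trans (measure_union_le _ _)
      _ ≤ _ := by
          rw [mul_add]
          gcongr
          exacts [min_le_left _ _, min_le_right _ _]

lemma mem_expFilter {ν : Measure Ω} {U : Set (Σ n : ℕ, Fin (n + 1) → Ω)} :
    U ∈ expFilter ν ↔ ∃ γ > 0, Tendsto (fun n : ℕ => ENNReal.ofReal (rexp ((n + 1 : ℕ) * γ)) *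
      Measure.pi (fun _ : Fin (n + 1) => ν) {x | ⟨n, x⟩ ∉ U}) atTop (𝓝 0) :=
  Iff.rfl

variable {ν : Measure Ω} [IsProbabilityMeasure ν] {f : Ω → ℝ} {a b : ℝ}

lemma eventually_expFilter_average_lt (hf : Measurable f) (hab : ∀ x, f x ∈ Set.Icc a b) {t : ℝ}
    (ht : ∫ y, f y ∂ν < t) : ∀ᶠ z in expFilter ν, (∑ i, f (z.2 i)) / (z.1 + 1) < t := by
  set c := a + (|b - a| + 1)
  have hac : ∀ x, f x ∈ Set.Icc a c := fun x =>
    ⟨(hab x).1, (hab x).2.trans (by linarith [le_abs_self (b - a)])⟩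
  set γ := (t - ∫ y, f y ∂ν) ^ 2 / (c - a) ^ 2
  have hγ : 0 < γ := by
    have hc : 0 < c - a := by simp only [c, add_sub_cancel_left]; positivity
    exact div_pos (pow_pos (sub_pos.2 ht) 2) (pow_pos hc 2)
  have hlim : Tendsto (fun n : ℕ => ENNReal.ofReal (rexp (-((n + 1 : ℕ) * γ)))) atTop (𝓝 0) := by
    simpa using ENNReal.tendsto_ofReal (tendsto_exp_neg_atTop_nhds_zero.comp
      ((tendsto_natCast_atTop_atTop.comp (tendsto_add_atTop_nat 1)).atTop_mul_const hγ))
  refine mem_expFilter.2 ⟨γ, hγ, tendsto_of_tendsto_of_tendsto_of_le_of_le tendsto_const_nhds hlim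
    (fun _ => zero_le) fun n => ?_⟩
  rw [← ofReal_measureReal, ← ENNReal.ofReal_mul (exp_pos _).le]
  refine ENNReal.ofReal_le_ofReal ?_
  calc rexp ((n + 1 : ℕ) * γ) * (Measure.pi fun _ : Fin (n + 1) => ν).real _
      ≤ rexp ((n + 1 : ℕ) * γ) * rexp (-((n + 1 : ℕ) * (2 * γ))) := by
        gcongr
        simpa only [Set.mem_ofPred, not_lt] using pi_le_average_le hf hac ht.le n
    _ = rexp (-((n + 1 : ℕ) * γ)) := by
        rw [← Real.exp_add]
        ring_nf

lemma tendsto_average_expFilter (hf : Measurable f) (hab : ∀ x, f x ∈ Set.Icc a b) :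
    Tendsto (fun z : Σ n : ℕ, Fin (n + 1) → Ω => (∑ i, f (z.2 i)) / (z.1 + 1)) (expFilter ν)
      (𝓝 (∫ y, f y ∂ν)) := by
  refine tendsto_order.2 ⟨fun t ht => ?_, fun t ht => eventually_expFilter_average_lt hf hab ht⟩
  filter_upwards [eventually_expFilter_average_lt (ν := ν) (t := -t) hf.neg
    (fun x => ⟨neg_le_neg (hab x).2, neg_le_neg (hab x).1⟩) (by simpa [integral_neg] using ht)]
    with z hz
  simpa [neg_div] using hz

end ExpFilter

section Empirical

lemma integral_empProb (n : ℕ) (x : Fin (n + 1) → ℝ) (f : ℝ → ℝ) :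
    ∫ y, f y ∂(empProb n x : Measure ℝ) = (∑ i, f (x i)) / (n + 1) := by
  change ∫ y, f y ∂(((n : ℝ≥0∞) + 1)⁻¹ • ∑ i, Measure.dirac (x i)) = _
  rw [integral_smul_measure, integral_finsetSum_measure fun i _ => integrable_dirac (by simp)]
  simp only [integral_dirac, ENNReal.toReal_inv, smul_eq_mul]
  rw [ENNReal.toReal_add (by simp) (by simp), ENNReal.toReal_natCast, ENNReal.toReal_one,
    inv_mul_eq_div]

lemma tendsto_integral_empProb_of_mem_Icc {ν : Measure ℝ} [IsProbabilityMeasure ν] {f : ℝ → ℝ}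
    {a b : ℝ} (hf : Measurable f) (hab : ∀ x, f x ∈ Set.Icc a b) :
    Tendsto (fun z : Σ n : ℕ, Fin (n + 1) → ℝ => ∫ y, f y ∂(empProb z.1 z.2 : Measure ℝ))
      (expFilter ν) (𝓝 (∫ y, f y ∂ν)) :=
  (tendsto_average_expFilter hf hab).congr fun z => (integral_empProb z.1 z.2 f).symm

lemma IsOrlicz.toReal_mV_empProb_le_iff {V : ℝ → ℝ} (hV : IsOrlicz V) {n : ℕ}
    {x : Fin (n + 1) → ℝ} {c : ℝ} :
    (mV V (empProb n x : Measure ℝ)).toReal ≤ c ↔ x ∈ OrliczBall V c (n + 1) := by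
  rw [hV.toReal_mV, integral_empProb, div_le_iff₀ (by positivity), OrliczBall, Set.mem_ofPred,
    Nat.cast_succ]

lemma IsOrlicz.mV_empProb_le_iff {V : ℝ → ℝ} (hV : IsOrlicz V) {n : ℕ} {x : Fin (n + 1) → ℝ}
    {c : ℝ} (hc : 0 ≤ c) :
    mV V (empProb n x : Measure ℝ) ≤ ENNReal.ofReal c ↔ x ∈ OrliczBall V c (n + 1) :=
  (ENNReal.le_ofReal_iff_toReal_le (empM1 V n x).2 hc).trans hV.toReal_mV_empProb_le_iff

variable {V₁ V₂ : ℝ → ℝ}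

lemma exists_sub_min_le_mul (hV₁ : IsOrlicz V₁) (hV₂ : IsOrlicz V₂)
    (hgrow : Tendsto (fun x => V₁ x / V₂ x) atTop atTop) {ε : ℝ} (hε : 0 < ε) :
    ∃ M, ∀ x, V₂ x - min (V₂ x) M ≤ ε * V₁ x := by
  obtain ⟨r, hr⟩ := ((hgrow.eventually_ge_atTop ε⁻¹).and
    (eventually_gt_atTop 0)).exists_forall_of_atTop
  refine ⟨V₂ r, fun x => ?_⟩
  rcases le_total |x| r with hx | hx
  · rw [min_eq_left (hV₂.le_of_abs_le (hx.trans (le_abs_self r))), sub_self]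
    exact mul_nonneg hε.le (hV₁.nonneg x)
  · obtain ⟨hratio, hx₀⟩ := hr |x| hx
    have hmin : 0 ≤ min (V₂ x) (V₂ r) := le_min (hV₂.nonneg x) (hV₂.nonneg r)
    rw [le_div_iff₀ (hV₂.pos hx₀.ne'), hV₁.map_abs, hV₂.map_abs, inv_mul_le_iff₀ hε] at hratio
    linarith

lemma exists_forall_abs_integral_sub_integral_min_le (hV₁ : IsOrlicz V₁) (hV₂ : IsOrlicz V₂)
    (hgrow : Tendsto (fun x => V₁ x / V₂ x) atTop atTop) {c : ℝ} (hc : 0 ≤ c) {ε : ℝ}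
    (hε : 0 < ε) :
    ∃ M, ∀ μ : Measure ℝ, IsProbabilityMeasure μ → mV V₁ μ ≤ ENNReal.ofReal c →
      |∫ x, V₂ x ∂μ - ∫ x, min (V₂ x) M ∂μ| ≤ ε := by
  obtain ⟨M, hM⟩ := exists_sub_min_le_mul hV₁ hV₂ hgrow (show 0 < ε / (c + 1) by positivity)
  refine ⟨M, fun μ _ hμ => ?_⟩
  have hi₁ := hV₁.integrable_of_mV_le hμ
  have hi : Integrable (fun x => V₂ x - min (V₂ x) M) μ := by
    refine (hi₁.const_mul (ε / (c + 1))).mono' ?_ (ae_of_all _ fun x => ?_)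
    · exact (hV₂.continuous.sub (hV₂.continuous.min continuous_const)).aestronglyMeasurable
    · rw [Real.norm_of_nonneg (sub_nonneg.2 (min_le_left _ _))]
      exact hM x
  have hmin : Integrable (fun x => min (V₂ x) M) μ :=
    .of_mem_Icc (min 0 M) M (hV₂.continuous.min continuous_const).aemeasurable
      (ae_of_all _ fun x => ⟨min_le_min_right _ (hV₂.nonneg x), min_le_right _ _⟩)
  have hi₂ : Integrable V₂ μ := (hi.add hmin).congr (ae_of_all _ fun x => sub_add_cancel _ _)
  rw [← integral_sub hi₂ hmin, abs_of_nonneg (integral_nonneg fun x =>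
    sub_nonneg.2 (min_le_left _ _))]
  calc ∫ x, (V₂ x - min (V₂ x) M) ∂μ ≤ ε / (c + 1) * ∫ x, V₁ x ∂μ := by
        rw [← integral_const_mul]
        exact integral_mono hi (hi₁.const_mul _) hM
    _ ≤ ε / (c + 1) * (c + 1) := by
        gcongr
        exact (hV₁.integral_le_of_mV_le hc hμ).trans (by linarith)
    _ = ε := div_mul_cancel₀ _ (by positivity)

lemma tendsto_integral_empProb_inf_orliczBall {c : ℝ} (hc : 0 ≤ c) (hV₁ : IsOrlicz V₁)
    (hV₂ : IsOrlicz V₂) (hgrow : Tendsto (fun x => V₁ x / V₂ x) atTop atTop) {ν : Measure ℝ}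
    [IsProbabilityMeasure ν] (hν : mV V₁ ν ≤ ENNReal.ofReal c) :
    Tendsto (fun z : Σ n : ℕ, Fin (n + 1) → ℝ => ∫ y, V₂ y ∂(empProb z.1 z.2 : Measure ℝ))
      (expFilter ν ⊓ 𝓟 {z | z.2 ∈ OrliczBall V₁ c (z.1 + 1)}) (𝓝 (∫ y, V₂ y ∂ν)) := by
  refine Metric.tendsto_nhds.2 fun ε hε => ?_
  obtain ⟨M, hM⟩ := exists_forall_abs_integral_sub_integral_min_le hV₁ hV₂ hgrow hc
    (show 0 < ε / 3 by positivity)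
  have htrunc := tendsto_integral_empProb_of_mem_Icc (ν := ν) (f := fun y => min (V₂ y) M)
    (hV₂.continuous.min continuous_const).measurable
    fun y => ⟨min_le_min_right M (hV₂.nonneg y), min_le_right _ _⟩
  rw [eventually_inf_principal]
  filter_upwards [Metric.tendsto_nhds.1 htrunc (ε / 3) (by positivity)] with ⟨n, x⟩ hclose hball
  rw [Real.dist_eq] at hclose
  have hemp := hM (empProb n x) inferInstance ((hV₁.mV_empProb_le_iff hc).2 hball)
  have hlim := hM ν inferInstance hν
  rw [abs_le] at hemp hlim
  rw [abs_lt] at hclose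
  rw [Real.dist_eq, abs_lt]
  constructor <;> linarith

lemma tendsto_empM1_inf_orliczBall {c : ℝ} (hc : 0 ≤ c) (hV₁ : IsOrlicz V₁) (hV₂ : IsOrlicz V₂)
    (hgrow : Tendsto (fun x => V₁ x / V₂ x) atTop atTop) {μ : M1 V₂}
    (hμ : mV V₁ μ.1 ≤ ENNReal.ofReal c) :
    Tendsto (fun z : Σ n : ℕ, Fin (n + 1) → ℝ => empM1 V₂ z.1 z.2)
      (expFilter μ.1 ⊓ 𝓟 {z | z.2 ∈ OrliczBall V₁ c (z.1 + 1)}) (𝓝 μ) := by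
  rw [nhds_induced, tendsto_comap_iff, nhds_prod_eq]
  refine Tendsto.prodMk (f := _ ⊓ _)
    (ProbabilityMeasure.tendsto_iff_forall_integral_tendsto.2 fun f => ?_) ?_
  · exact (tendsto_integral_empProb_of_mem_Icc f.continuous.measurable
      fun y => abs_le.1 (f.norm_coe_le_norm y)).mono_left inf_le_left
  · simp only [hV₂.toReal_mV]
    exact tendsto_integral_empProb_inf_orliczBall hc hV₁ hV₂ hgrow hμ

end Empirical

section Conditioning

variable {κ : Type*} [Fintype κ] {V : κ → ℝ → ℝ} {c c' p : κ → ℝ}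

lemma sum_energy_le_of_mem_iInter_orliczBall (hp : 0 ≤ p) {n : ℕ} {x : Fin n → ℝ}
    (hx : x ∈ ⋂ k, OrliczBall (V k) (c k) n) :
    ∑ i, energy V p (x i) ≤ n * ∑ k, p k * c k := by
  rw [sum_energy, Finset.mul_sum]
  refine Finset.sum_le_sum fun k _ => ?_
  calc p k * ∑ i, V k (x i) ≤ p k * (c k * n) :=
        mul_le_mul_of_nonneg_left (Set.mem_iInter.1 hx k) (hp k)
    _ = n * (p k * c k) := by ring

namespace IsKKT

lemma eventually_cond_le (hp : IsKKT V c p) (hV : ∀ k, IsOrlicz (V k)) (hc : ∀ k, 0 < c k)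
    (hcc' : c ≤ c') {γ : ℝ} (hγ : ∑ k, p k * c' k < ∑ k, p k * c k + γ) :
    ∀ᶠ n : ℕ in atTop, ∀ A : Set (Fin n → ℝ),
      ProbabilityTheory.cond volume (⋂ k, OrliczBall (V k) (c' k) n) A ≤
        ENNReal.ofReal (rexp (n * γ)) * Measure.pi (fun _ => gibbs (energy V p)) A := by
  have hW := hp.isOrlicz_energy hV
  obtain ⟨τ, hτ, hγτ⟩ : ∃ τ > 0, ∑ k, p k * c k + γ = ∑ k, p k * c' k + τ :=
    ⟨_, sub_pos.2 hγ, (add_sub_cancel _ _).symm⟩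
  filter_upwards [hp.eventually_le_volume hV hc hτ] with n hn A
  set B := ⋂ k, OrliczBall (V k) (c' k) n
  have hexp : rexp (n * ∑ k, p k * c' k + Fintype.card (Fin n) * log (partitionFun (energy V p))) =
      rexp (n * (log (partitionFun (energy V p)) + ∑ k, p k * c k - τ)) * rexp (n * γ) := by
    rw [← Real.exp_add, Fintype.card_fin, eq_sub_of_add_eq hγτ.symm]
    ring_nf
  rw [ProbabilityTheory.cond_apply (.iInter fun k =>
    measurableSet_orliczBall (hV k).continuous.measurable _ _), ← ENNReal.div_eq_inv_mul]
  refine ENNReal.div_le_of_le_mul' ?_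
  calc volume (B ∩ A)
      ≤ ENNReal.ofReal (rexp (n * ∑ k, p k * c' k +
          Fintype.card (Fin n) * log (partitionFun (energy V p)))) *
            Measure.pi (fun _ => gibbs (energy V p)) (B ∩ A) :=
        volume_le_pi_gibbs hW.continuous.measurable hW.integrable_exp_neg fun x hx =>
          sum_energy_le_of_mem_iInter_orliczBall hp.pos.le hx.1
    _ ≤ volume B *
          (ENNReal.ofReal (rexp (n * γ)) * Measure.pi (fun _ => gibbs (energy V p)) A) := by
        rw [hexp, ENNReal.ofReal_mul (exp_pos _).le, mul_assoc]
        gcongr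
        · exact hn.trans (measure_mono (Set.iInter_mono fun k =>
            orliczBall_subset (V k) (hcc' k) n))
        · exact Set.inter_subset_right

lemma eventually_isProbabilityMeasure_cond (hp : IsKKT V c p) (hV : ∀ k, IsOrlicz (V k))
    (hc : ∀ k, 0 < c k) (hcc' : c ≤ c') :
    ∀ᶠ n : ℕ in atTop, IsProbabilityMeasure
      (ProbabilityTheory.cond volume (⋂ k, OrliczBall (V k) (c' k) n)) := by
  obtain ⟨-, k, -⟩ := Pi.lt_def.1 hp.pos
  filter_upwards [hp.eventually_le_volume hV hc one_pos] with n hn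
  refine ProbabilityTheory.cond_isProbabilityMeasure_of_finite ?_
    (measure_ne_top_of_subset (Set.iInter_subset _ k) ((hV k).volume_orliczBall_ne_top _ _))
  exact ((ENNReal.ofReal_pos.2 (exp_pos _)).trans_le (hn.trans (measure_mono
    (Set.iInter_mono fun k => orliczBall_subset (V k) (hcc' k) n)))).ne'

lemma eventually_tendsto_cond (hp : IsKKT V c p) (hV : ∀ k, IsOrlicz (V k)) (hc : ∀ k, 0 < c k)
    {U : Set (Σ n : ℕ, Fin (n + 1) → ℝ)} (hU : U ∈ expFilter (gibbs (energy V p))) :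
    ∀ᶠ c' in 𝓝[≥] c, Tendsto (fun n : ℕ => ProbabilityTheory.cond volume
      (⋂ k, OrliczBall (V k) (c' k) (n + 1)) {x | ⟨n, x⟩ ∈ U}) atTop (𝓝 1) := by
  obtain ⟨γ, hγ, hlim⟩ := mem_expFilter.1 hU
  have hlt : ∀ᶠ c' in 𝓝 c, ∑ k, p k * c' k < ∑ k, p k * c k + γ :=
    (Continuous.tendsto (by fun_prop) c).eventually_lt_const (lt_add_of_pos_right _ hγ)
  filter_upwards [hlt.filter_mono nhdsWithin_le_nhds, self_mem_nhdsWithin] with c' hc' hcc'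
  refine tendsto_measure_one_of_tendsto_compl ((tendsto_add_atTop_nat 1).eventually
    (hp.eventually_isProbabilityMeasure_cond hV hc hcc')) ?_
  refine tendsto_of_tendsto_of_tendsto_of_le_of_le' tendsto_const_nhds hlim
    (Eventually.of_forall fun _ => zero_le) ?_
  filter_upwards [(tendsto_add_atTop_nat 1).eventually (hp.eventually_cond_le hV hc hcc' hc')]
    with n hn using hn _

end IsKKT

lemma cond_unifBall {V₁ V₂ : ℝ → ℝ} (hV₁ : IsOrlicz V₁) (hV₂ : IsOrlicz V₂) (r R : ℝ) {ε : ℝ}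
    (hε : 0 ≤ ε) (n : ℕ) :
    ProbabilityTheory.cond (unifBall V₁ r (n + 1))
        {x | (mV V₂ (empProb n x : Measure ℝ)).toReal ∈ Set.Icc (-ε) R} =
      ProbabilityTheory.cond volume
        (OrliczBall V₁ r (n + 1) ∩ OrliczBall V₂ R (n + 1)) := by
  have hset : {x | (mV V₂ (empProb n x : Measure ℝ)).toReal ∈ Set.Icc (-ε) R} =
      OrliczBall V₂ R (n + 1) := by
    ext x
    exact (and_iff_right ((neg_nonpos.2 hε).trans toReal_nonneg)).trans
      hV₂.toReal_mV_empProb_le_iff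
  rw [hset]
  exact ProbabilityTheory.cond_cond_eq_cond_inter'
    (measurableSet_orliczBall hV₁.continuous.measurable _ _)
    (measurableSet_orliczBall hV₂.continuous.measurable _ _) (hV₁.volume_orliczBall_ne_top _ _)

lemma IsKKT.eventually_tendsto_cond_unifBall {V₁ V₂ : ℝ → ℝ} {r R : ℝ} {p : Fin 2 → ℝ}
    (hp : IsKKT ![V₁, V₂] ![r, R] p) (hV₁ : IsOrlicz V₁) (hV₂ : IsOrlicz V₂)
    (hgrow : Tendsto (fun x => V₁ x / V₂ x) atTop atTop) (hr : 0 < r) (hR : 0 < R) {μ : M1 V₂}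
    (hμ : (μ.1 : Measure ℝ) = gibbs (energy ![V₁, V₂] p)) {G : Set (M1 V₂)} (hG : G ∈ 𝓝 μ) :
    ∀ᶠ ε in 𝓝[>] 0, Tendsto (fun n : ℕ => ProbabilityTheory.cond (unifBall V₁ r (n + 1))
      {x | (mV V₂ (empProb n x : Measure ℝ)).toReal ∈ Set.Icc (-ε) (R + ε)}
      {x | empM1 V₂ n x ∈ G}) atTop (𝓝 1) := by
  have hU := mem_inf_principal.1
    (tendsto_empM1_inf_orliczBall hr.le hV₁ hV₂ hgrow (hμ ▸ hp.mV_le 0) hG)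
  rw [hμ] at hU
  have hlim : Tendsto (fun ε => ![r, R + ε]) (𝓝[>] 0) (𝓝[≥] ![r, R]) := by
    refine tendsto_nhdsWithin_iff.2 ⟨?_, ?_⟩
    · exact (Continuous.tendsto' (by fun_prop) 0 _ (by simp)).mono_left nhdsWithin_le_nhds
    · filter_upwards [self_mem_nhdsWithin] with ε hε
      exact Fin.forall_fin_two.2 ⟨le_rfl, le_add_of_nonneg_right (Set.mem_Ioi.1 hε).le⟩
  filter_upwards [hlim.eventually (hp.eventually_tendsto_cond (Fin.forall_fin_two.2 ⟨hV₁, hV₂⟩)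
    (Fin.forall_fin_two.2 ⟨hr, hR⟩) hU), self_mem_nhdsWithin] with ε hcond hε
  refine hcond.congr fun n => ?_
  have hB : ⋂ k, OrliczBall ((![V₁, V₂] : Fin 2 → ℝ → ℝ) k) ((![r, R + ε] : Fin 2 → ℝ) k) (n + 1) =
      OrliczBall V₁ r (n + 1) ∩ OrliczBall V₂ (R + ε) (n + 1) := by
    ext x
    exact Set.mem_iInter.trans Fin.forall_fin_two
  have hm : MeasurableSet (OrliczBall V₁ r (n + 1) ∩ OrliczBall V₂ (R + ε) (n + 1)) :=
    (measurableSet_orliczBall hV₁.continuous.measurable _ _).inter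
      (measurableSet_orliczBall hV₂.continuous.measurable _ _)
  rw [hB, cond_unifBall hV₁ hV₂ r (R + ε) (Set.mem_Ioi.1 hε).le n,
    ← ProbabilityTheory.cond_inter_self hm, ← ProbabilityTheory.cond_inter_self hm {x | _ ∈ G}]
  congr 1
  ext x
  exact and_congr_right fun hx => ⟨fun h => h hx.1, fun h _ => h⟩

end Conditioning

/-- There is a unique maximizer `ν*` of the entropy under the constraints
`m_{V₁}(ν) ≤ 1` and `m_{V₂}(ν) ∈ [0,R]`, and the empirical measure of a uniform random
point of `B₁^{n,V₁}`, conditioned on `m_{V₂}(L^{n,V₁}) ∈ [-ε, R+ε]`, concentrates on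
`ν*` in the `d_{V₂}`-topology as `n → ∞` followed by `ε → 0`. -/
theorem stmt16 (V₁ V₂ : ℝ → ℝ) (hV₁ : IsOrlicz V₁) (hV₂ : IsOrlicz V₂)
    (hgrow : Tendsto (fun x : ℝ => V₁ x / V₂ x) (atTop ⊔ atBot) atTop)
    (R : ℝ) (hR : 0 < R) :
    ∃ νstar : M1 V₂,
      mV V₁ (νstar.1 : Measure ℝ) ≤ 1 ∧ mV V₂ (νstar.1 : Measure ℝ) ≤ ENNReal.ofReal R ∧
      (∀ ν : ProbabilityMeasure ℝ,
        mV V₁ (ν : Measure ℝ) ≤ 1 → mV V₂ (ν : Measure ℝ) ≤ ENNReal.ofReal R →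
          diffEnt (ν : Measure ℝ) ≤ diffEnt (νstar.1 : Measure ℝ)) ∧
      (∀ ν : ProbabilityMeasure ℝ,
        mV V₁ (ν : Measure ℝ) ≤ 1 → mV V₂ (ν : Measure ℝ) ≤ ENNReal.ofReal R →
          diffEnt (ν : Measure ℝ) = diffEnt (νstar.1 : Measure ℝ) → ν = νstar.1) ∧
      ∀ G : Set (M1 V₂), IsOpen G → νstar ∈ G →
        ∀ δ : ℝ, 0 < δ → ∃ ε₀ : ℝ, 0 < ε₀ ∧ ∀ ε : ℝ, 0 < ε → ε ≤ ε₀ →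
          ∃ N : ℕ, ∀ n : ℕ, N ≤ n →
            |(ProbabilityTheory.cond (unifBall V₁ 1 (n + 1))
                {x | (mV V₂ (empProb n x : Measure ℝ)).toReal ∈ Set.Icc (-ε) (R + ε)}
                {x | empM1 V₂ n x ∈ G}).toReal - 1| < δ := by
  have hV : ∀ k, IsOrlicz ((![V₁, V₂] : Fin 2 → ℝ → ℝ) k) := Fin.forall_fin_two.2 ⟨hV₁, hV₂⟩
  have hc : ∀ k, 0 < (![1, R] : Fin 2 → ℝ) k := Fin.forall_fin_two.2 ⟨one_pos, hR⟩
  have hfeasible : ∀ {ν : Measure ℝ}, mV V₁ ν ≤ 1 → mV V₂ ν ≤ ENNReal.ofReal R →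
      ∀ k, mV ((![V₁, V₂] : Fin 2 → ℝ → ℝ) k) ν ≤ ENNReal.ofReal ((![1, R] : Fin 2 → ℝ) k) :=
    fun h₁ h₂ => Fin.forall_fin_two.2 ⟨h₁.trans_eq ofReal_one.symm, h₂⟩
  obtain ⟨p, hp⟩ := exists_isKKT hV hc
  have hprob := isProbabilityMeasure_gibbs (hp.integrable_exp_neg hV)
  refine ⟨⟨⟨gibbs (energy ![V₁, V₂] p), hprob⟩, ne_top_of_le_ne_top ofReal_ne_top (hp.mV_le 1)⟩,
    (hp.mV_le 0).trans_eq ofReal_one, hp.mV_le 1,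
    fun ν h₁ h₂ => hp.diffEnt_le hV (fun k => (hc k).le) (hfeasible h₁ h₂),
    fun ν h₁ h₂ h => Subtype.ext (hp.eq_gibbs (ν := ν) hV (fun k => (hc k).le) (hfeasible h₁ h₂) h),
    fun G hG hmem δ hδ => ?_⟩
  obtain ⟨ε₀, hε₀, hlim⟩ := mem_nhdsGT_iff_exists_Ioc_subset.1
    (hp.eventually_tendsto_cond_unifBall hV₁ hV₂ (hgrow.mono_left le_sup_left) one_pos hR rfl
      (hG.mem_nhds hmem))
  exact ⟨ε₀, hε₀, fun ε hε hεε₀ => Metric.tendsto_atTop.1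
    ((ENNReal.tendsto_toReal one_ne_top).comp (hlim ⟨hε, hεε₀⟩)) δ hδ⟩
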